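/- For every τ in the complex upper half-plane: (a) c(τ) + c₁(τ) + 2·c(τ)²·c₁(τ)² = 0; (b) 2·c(τ)²·c₁(τ/2) + c₁(τ/2)² − c(τ) = 0; moreover c(τ)·c₁(τ) = −c(2τ). -/

import Mathlib

open Complex

/-- The nome `q = exp(2πiτ)`. -/
noncomputable def nome (τ : ℂ) : ℂ := Complex.exp (2 * Real.pi * I * τ)

/-- Ramanujan's cubic continued fraction, as an infinite product:
`c(τ) = q^{1/3} ∏_{n≥1} (1-q^{6n-1})(1-q^{6n-5})/(1-q^{6n-3})²`. -/
noncomputable def c (τ : ℂ) : ℂ :=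
  Complex.exp (2 * Real.pi * I * τ / 3) *
    ∏' n : ℕ,
      ((1 - nome τ ^ (6 * (n + 1) - 1)) * (1 - nome τ ^ (6 * (n + 1) - 5)) /
        (1 - nome τ ^ (6 * (n + 1) - 3)) ^ 2)

/-- `c₁(τ) = c(τ + 3/2)`. -/
noncomputable def c₁ (τ : ℂ) : ℂ := c (τ + 3 / 2)

/-!
Letting `N → ∞` in a finite form of the Jacobi triple product, whose coefficients are the Gaussian
binomials `(2N choose N + k)`, gives the triple product for `θ(z, τ) = jacobiTheta₂ z τ`. The
`q`-factors of `c` match it, so that `c(τ) = q^{1/3} θ(1/2 - 2τ, 6τ) / θ(1/2, 6τ)`, and the shift by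
`3/2` turns this into `c₁(τ) = -q^{1/3} θ(-2τ, 6τ) / θ(0, 6τ)`. Splitting the lattice `ℤ × ℤ`
according to the parity of the sum of the coordinates expresses a product of two theta functions at
`τ` through theta functions at `2τ`. This yields `c(τ) c₁(τ) = -c(2τ)` and
`c(τ) + c₁(τ) = -2 c(2τ)²`, which together give (a); (b) is (a) at `τ/2` multiplied by `c₁(τ/2)`.
-/

open Filter Topology

section QPochhammer

/-- The finite `q`-Pochhammer symbol `(a; y)_n = ∏_{j < n} (1 - a yʲ)`. -/
def qPochhammer {R : Type*} [CommRing R] (a y : R) (n : ℕ) : R :=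
  ∏ j ∈ Finset.range n, (1 - a * y ^ j)

/-- The infinite `q`-Pochhammer symbol `(a; y)_∞ = ∏_{j ≥ 0} (1 - a yʲ)`. -/
noncomputable def qPochhammerInf {R : Type*} [CommRing R] [TopologicalSpace R] (a y : R) : R :=
  ∏' j : ℕ, (1 - a * y ^ j)

lemma qPochhammer_succ {R : Type*} [CommRing R] (a y : R) (n : ℕ) :
    qPochhammer a y (n + 1) = qPochhammer a y n * (1 - a * y ^ n) :=
  Finset.prod_range_succ _ _

lemma qPochhammer_self_ne_zero {K : Type*} [Field K] {y : K} (hy : ¬IsOfFinOrder y) (n : ℕ) :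
    qPochhammer y y n ≠ 0 := by
  refine Finset.prod_ne_zero_iff.mpr fun j _ hj ↦ hy ?_
  exact isOfFinOrder_iff_pow_eq_one.mpr
    ⟨j + 1, j.succ_pos, by rw [pow_succ']; exact (sub_eq_zero.mp hj).symm⟩

variable {𝕜 : Type*} [NormedField 𝕜] {a y : 𝕜}

lemma summable_norm_mul_pow (a : 𝕜) (hy : ‖y‖ < 1) : Summable fun j : ℕ ↦ ‖-(a * y ^ j)‖ := by
  simpa only [norm_neg, norm_mul, norm_pow] using
    (summable_geometric_of_lt_one (norm_nonneg y) hy).mul_left ‖a‖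

lemma mul_pow_ne_one_of_norm_lt_one (ha : ‖a‖ < 1) (hy : ‖y‖ ≤ 1) (j : ℕ) : a * y ^ j ≠ 1 := by
  refine ne_of_apply_ne norm (ne_of_lt ?_)
  rw [norm_mul, norm_pow, norm_one]
  exact mul_lt_one_of_nonneg_of_lt_one_left (norm_nonneg a) ha (pow_le_one₀ (norm_nonneg y) hy)

variable [CompleteSpace 𝕜]

lemma hasProd_qPochhammerInf (a : 𝕜) (hy : ‖y‖ < 1) :
    HasProd (fun j : ℕ ↦ 1 - a * y ^ j) (qPochhammerInf a y) := by
  simpa only [qPochhammerInf, sub_eq_add_neg] using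
    (multipliable_one_add_of_summable (summable_norm_mul_pow a hy)).hasProd

lemma tendsto_qPochhammer (a : 𝕜) (hy : ‖y‖ < 1) :
    Tendsto (qPochhammer a y) atTop (𝓝 (qPochhammerInf a y)) :=
  (hasProd_qPochhammerInf a hy).tendsto_prod_nat

lemma qPochhammerInf_ne_zero (hy : ‖y‖ < 1) (h : ∀ j : ℕ, a * y ^ j ≠ 1) :
    qPochhammerInf a y ≠ 0 := by
  simpa only [qPochhammerInf, sub_eq_add_neg] using tprod_one_add_ne_zero_of_summable
    (fun j ↦ by simpa only [← sub_eq_add_neg] using sub_ne_zero.mpr (h j).symm)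
    (summable_norm_mul_pow a hy)

lemma qPochhammerInf_self_ne_zero (hy : ‖y‖ < 1) : qPochhammerInf y y ≠ 0 :=
  qPochhammerInf_ne_zero hy (mul_pow_ne_one_of_norm_lt_one hy hy.le)

end QPochhammer

section CentralQBinomial

/-- The reciprocal of `(y; y)_n`, set to zero for `n < 0`. With this convention the recurrence
`invQPochhammer_sub_one` holds for all integers. -/
def invQPochhammer {K : Type*} [Field K] (y : K) (n : ℤ) : K :=
  if 0 ≤ n then (qPochhammer y y n.toNat)⁻¹ else 0

/-- The Gaussian binomial coefficient `(2N choose N + k)` in the variable `y`, which vanishes for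
`|k| > N`. -/
def centralQBinom {K : Type*} [Field K] (y : K) (N : ℕ) (k : ℤ) : K :=
  qPochhammer y y (2 * N) * invQPochhammer y (N + k) * invQPochhammer y (N - k)

section Field

variable {K : Type*} [Field K] {x y z : K}

lemma invQPochhammer_natCast (y : K) (n : ℕ) : invQPochhammer y n = (qPochhammer y y n)⁻¹ := by
  simp [invQPochhammer]

lemma invQPochhammer_of_neg (y : K) {n : ℤ} (hn : n < 0) : invQPochhammer y n = 0 :=
  if_neg hn.not_ge

lemma invQPochhammer_sub_one (hy : ¬IsOfFinOrder y) (n : ℤ) :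
    invQPochhammer y (n - 1) = (1 - y ^ n) * invQPochhammer y n := by
  rcases lt_trichotomy n 0 with h | rfl | h
  · rw [invQPochhammer_of_neg y h, invQPochhammer_of_neg y (by lia), mul_zero]
  · simp [invQPochhammer]
  · obtain ⟨m, rfl⟩ : ∃ m : ℕ, n = (m + 1 : ℕ) := ⟨(n - 1).toNat, by lia⟩
    have hm := qPochhammer_self_ne_zero hy (m + 1)
    rw [show ((m + 1 : ℕ) : ℤ) - 1 = m by lia, invQPochhammer_natCast, invQPochhammer_natCast,
      zpow_natCast]
    rw [qPochhammer_succ, ← pow_succ'] at hm ⊢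
    rw [mul_inv_rev, mul_inv_cancel_left₀ (right_ne_zero_of_mul hm)]

lemma centralQBinom_zero (y : K) (k : ℤ) : centralQBinom y 0 k = if k = 0 then 1 else 0 := by
  rcases lt_trichotomy k 0 with h | rfl | h
  · simp [centralQBinom, invQPochhammer, h.not_ge, h.ne]
  · simp [centralQBinom, invQPochhammer, qPochhammer]
  · simp [centralQBinom, invQPochhammer, h.not_ge, h.ne']

/-- Two steps of the `q`-Pascal rule. -/
lemma centralQBinom_succ (hy : ¬IsOfFinOrder y) (hy0 : y ≠ 0) (N : ℕ) (k : ℤ) :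
    centralQBinom y (N + 1) k = (1 + y ^ (2 * N + 1)) * centralQBinom y N k +
      y ^ (N - k + 1) * centralQBinom y N (k - 1) +
      y ^ (N + k + 1) * centralQBinom y N (k + 1) := by
  have hplus := invQPochhammer_sub_one hy (N + k + 1)
  have hplus' := invQPochhammer_sub_one hy (N + k)
  have hminus := invQPochhammer_sub_one hy (N - k + 1)
  have hminus' := invQPochhammer_sub_one hy (N - k)
  have hpow : y ^ (2 * N) = y ^ (N + k : ℤ) * y ^ (N - k : ℤ) := by
    rw [← zpow_add₀ hy0, ← zpow_natCast]
    congr 1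
    push_cast
    ring
  rw [add_sub_cancel_right] at hplus hminus
  simp only [centralQBinom, Nat.cast_add_one, show 2 * (N + 1) = 2 * N + 1 + 1 by ring,
    qPochhammer_succ]
  rw [show (N + (k - 1) : ℤ) = N + k - 1 by ring, show (N - (k - 1) : ℤ) = N - k + 1 by ring,
    show (N + (k + 1) : ℤ) = N + k + 1 by ring, show (N - (k + 1) : ℤ) = N - k - 1 by ring,
    show (N + 1 + k : ℤ) = N + k + 1 by ring, show (N + 1 - k : ℤ) = N - k + 1 by ring,
    hplus', hminus', hplus, hminus, zpow_add_one₀ hy0, zpow_add_one₀ hy0, pow_succ, hpow]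
  ring

lemma mul_zpow_sq_mul_zpow_sub_one (hx : x ≠ 0) (hz : z ≠ 0) (N : ℕ) (k : ℤ) :
    z * x ^ (2 * N + 1) * (x ^ ((k - 1) ^ 2) * z ^ (k - 1)) =
      (x ^ 2) ^ (N - k + 1 : ℤ) * (x ^ (k ^ 2) * z ^ k) := by
  have hexp : x ^ (2 * N + 1) * x ^ ((k - 1) ^ 2) = (x ^ 2) ^ (N - k + 1 : ℤ) * x ^ (k ^ 2) := by
    simp only [← zpow_natCast, ← zpow_mul, ← zpow_add₀ hx]
    congr 1
    push_cast
    ring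
  rw [zpow_sub_one₀ hz]
  field_simp
  linear_combination hexp

lemma div_zpow_sq_mul_zpow_add_one (hx : x ≠ 0) (hz : z ≠ 0) (N : ℕ) (k : ℤ) :
    x ^ (2 * N + 1) / z * (x ^ ((k + 1) ^ 2) * z ^ (k + 1)) =
      (x ^ 2) ^ (N + k + 1 : ℤ) * (x ^ (k ^ 2) * z ^ k) := by
  have h := mul_zpow_sq_mul_zpow_sub_one hx (inv_ne_zero hz) N (-k)
  rwa [← neg_add', neg_sq, neg_sq, inv_zpow', inv_zpow', neg_neg, neg_neg, sub_neg_eq_add,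
    ← div_eq_inv_mul] at h

lemma hasSum_finite_triple_product [TopologicalSpace K] [IsTopologicalSemiring K]
    (hx : ¬IsOfFinOrder x) (hx0 : x ≠ 0) (hz : z ≠ 0) (N : ℕ) :
    HasSum (fun k : ℤ ↦ centralQBinom (x ^ 2) N k * (x ^ (k ^ 2) * z ^ k))
      (qPochhammer (-(x * z)) (x ^ 2) N * qPochhammer (-(x / z)) (x ^ 2) N) := by
  have hx2 : ¬IsOfFinOrder (x ^ 2) := fun h ↦ hx (h.of_pow two_ne_zero)
  induction N with
  | zero =>
    convert hasSum_ite_eq (0 : ℤ) (1 : K) using 2 with k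
    · rw [centralQBinom_zero]
      split_ifs with hk <;> simp [hk]
    · simp [qPochhammer]
  | succ N ih =>
    have hmid := ih.mul_left (1 + (x ^ 2) ^ (2 * N + 1))
    have hup := ((Equiv.subRight (1 : ℤ)).hasSum_iff.mpr ih).mul_left (z * x ^ (2 * N + 1))
    have hdown := ((Equiv.addRight (1 : ℤ)).hasSum_iff.mpr ih).mul_left (x ^ (2 * N + 1) / z)
    have hfactor : (1 - -(x * z) * (x ^ 2) ^ N) * (1 - -(x / z) * (x ^ 2) ^ N) =
        1 + (x ^ 2) ^ (2 * N + 1) + z * x ^ (2 * N + 1) + x ^ (2 * N + 1) / z := by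
      field_simp
      ring
    rw [qPochhammer_succ, qPochhammer_succ, mul_mul_mul_comm, hfactor, mul_comm, add_mul, add_mul]
    refine ((hmid.add hup).add hdown).congr_fun fun k ↦ ?_
    simp only [Function.comp_apply, Equiv.subRight_apply, Equiv.coe_addRight]
    rw [centralQBinom_succ hx2 (pow_ne_zero 2 hx0)]
    linear_combination
      -centralQBinom (x ^ 2) N (k - 1) * mul_zpow_sq_mul_zpow_sub_one hx0 hz N k -
        centralQBinom (x ^ 2) N (k + 1) * div_zpow_sq_mul_zpow_add_one hx0 hz N k

end Field

variable {𝕜 : Type*} [NormedField 𝕜] [CompleteSpace 𝕜] {y : 𝕜}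

lemma tendsto_invQPochhammer_atTop (hy : ‖y‖ < 1) :
    Tendsto (invQPochhammer y) atTop (𝓝 (qPochhammerInf y y)⁻¹) := by
  have htoNat : Tendsto Int.toNat atTop atTop := tendsto_atTop.mpr fun b ↦ by
    filter_upwards [eventually_ge_atTop (b : ℤ)] with n hn
    lia
  refine (((tendsto_qPochhammer y hy).inv₀ (qPochhammerInf_self_ne_zero hy)).comp
    htoNat).congr' ?_
  filter_upwards [eventually_ge_atTop 0] with n hn
  exact (if_pos hn).symm

lemma exists_norm_invQPochhammer_le (hy : ‖y‖ < 1) : ∃ C, ∀ n, ‖invQPochhammer y n‖ ≤ C := by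
  obtain ⟨C, hC⟩ := (Metric.isBounded_range_of_tendsto _
    ((tendsto_qPochhammer y hy).inv₀ (qPochhammerInf_self_ne_zero hy))).exists_norm_le
  refine ⟨C, fun n ↦ ?_⟩
  rw [invQPochhammer]
  split_ifs
  · exact hC _ ⟨_, rfl⟩
  · simpa using (norm_nonneg _).trans (hC _ ⟨0, rfl⟩)

lemma tendsto_centralQBinom (hy : ‖y‖ < 1) (k : ℤ) :
    Tendsto (centralQBinom y · k) atTop (𝓝 (qPochhammerInf y y)⁻¹) := by
  have hplus : Tendsto (fun N : ℕ ↦ (N + k : ℤ)) atTop atTop :=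
    tendsto_atTop_add_const_right _ k tendsto_natCast_atTop_atTop
  have hminus : Tendsto (fun N : ℕ ↦ (N - k : ℤ)) atTop atTop :=
    tendsto_atTop_add_const_right _ (-k) tendsto_natCast_atTop_atTop
  have h := (((tendsto_qPochhammer y hy).comp (tendsto_id.const_mul_atTop' two_pos)).mul
    ((tendsto_invQPochhammer_atTop hy).comp hplus)).mul
    ((tendsto_invQPochhammer_atTop hy).comp hminus)
  rwa [mul_inv_cancel₀ (qPochhammerInf_self_ne_zero hy), one_mul] at h

lemma exists_norm_centralQBinom_le (hy : ‖y‖ < 1) : ∃ C, ∀ N k, ‖centralQBinom y N k‖ ≤ C := by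
  obtain ⟨C, hC⟩ := exists_norm_invQPochhammer_le hy
  obtain ⟨D, hD⟩ := (Metric.isBounded_range_of_tendsto _ (tendsto_qPochhammer y hy)).exists_norm_le
  have hC0 := (norm_nonneg _).trans (hC 0)
  have hD0 := (norm_nonneg _).trans (hD _ ⟨0, rfl⟩)
  refine ⟨D * C * C, fun N k ↦ ?_⟩
  rw [centralQBinom, norm_mul, norm_mul]
  gcongr
  exacts [hD _ ⟨_, rfl⟩, hC _, hC _]

end CentralQBinomial

section Nome

lemma nome_ne_zero (τ : ℂ) : nome τ ≠ 0 := exp_ne_zero _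

lemma norm_nome_lt_one {τ : ℂ} (hτ : 0 < τ.im) : ‖nome τ‖ < 1 :=
  UpperHalfPlane.norm_exp_two_pi_I_lt_one ⟨τ, hτ⟩

lemma nome_add (τ σ : ℂ) : nome (τ + σ) = nome τ * nome σ := by
  rw [nome, nome, nome, ← exp_add, mul_add]

lemma nome_sub (τ σ : ℂ) : nome (τ - σ) = nome τ / nome σ := by
  rw [nome, nome, nome, ← exp_sub, mul_sub]

lemma nome_ofNat_mul (n : ℕ) [n.AtLeastTwo] (τ : ℂ) : nome (ofNat(n) * τ) = nome τ ^ n := by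
  rw [nome, nome, ← exp_nat_mul, mul_left_comm]
  rfl

lemma nome_one_half : nome (1 / 2) = -1 := by
  rw [nome, ← exp_pi_mul_I]
  ring_nf

lemma nome_add_one_half (τ : ℂ) : nome (τ + 1 / 2) = -nome τ := by
  rw [nome_add, nome_one_half, mul_neg_one]

lemma nome_sub_one_half (τ : ℂ) : nome (τ - 1 / 2) = -nome τ := by
  rw [nome_sub, nome_one_half, div_neg, div_one]

end Nome

section JacobiTheta

lemma jacobiTheta₂_term_eq_nome (k : ℤ) (z τ : ℂ) :
    jacobiTheta₂_term k z τ = nome (τ / 2) ^ (k ^ 2) * nome z ^ k := by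
  rw [jacobiTheta₂_term, nome, nome, ← exp_int_mul, ← exp_int_mul, ← exp_add]
  congr 1
  push_cast
  ring

theorem jacobiTheta₂_triple_product (z : ℂ) {τ : ℂ} (hτ : 0 < τ.im) :
    jacobiTheta₂ z τ = qPochhammerInf (nome τ) (nome τ) *
      (qPochhammerInf (-nome (τ / 2 + z)) (nome τ) *
        qPochhammerInf (-nome (τ / 2 - z)) (nome τ)) := by
  have hq := norm_nome_lt_one hτ
  have hsq : nome (τ / 2) ^ 2 = nome τ := by rw [← nome_ofNat_mul, mul_div_cancel₀ τ two_ne_zero]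
  have hx : ¬IsOfFinOrder (nome (τ / 2)) := fun h ↦
    (norm_nome_lt_one (τ := τ / 2) (by simpa using hτ)).ne h.norm_eq_one
  have hfinite (N : ℕ) : ∑' k, centralQBinom (nome τ) N k * jacobiTheta₂_term k z τ =
      qPochhammer (-nome (τ / 2 + z)) (nome τ) N * qPochhammer (-nome (τ / 2 - z)) (nome τ) N := by
    simpa only [jacobiTheta₂_term_eq_nome, hsq, nome_add, nome_sub] using
      (hasSum_finite_triple_product hx (nome_ne_zero _) (nome_ne_zero z) N).tsum_eq
  obtain ⟨C, hC⟩ := exists_norm_centralQBinom_le hq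
  have hseries : Tendsto (fun N ↦ ∑' k, centralQBinom (nome τ) N k * jacobiTheta₂_term k z τ) atTop
      (𝓝 (∑' k, (qPochhammerInf (nome τ) (nome τ))⁻¹ * jacobiTheta₂_term k z τ)) := by
    refine tendsto_tsum_of_dominated_convergence
      (((summable_jacobiTheta₂_term_iff z τ).mpr hτ).norm.mul_left C)
      (fun k ↦ (tendsto_centralQBinom hq k).mul_const _) (Eventually.of_forall fun N k ↦ ?_)
    rw [norm_mul]
    gcongr
    exact hC N k
  have hproduct := (tendsto_qPochhammer (-nome (τ / 2 + z)) hq).mul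
    (tendsto_qPochhammer (-nome (τ / 2 - z)) hq)
  rw [tsum_mul_left] at hseries
  rw [← tendsto_nhds_unique (hseries.congr hfinite) hproduct,
    mul_inv_cancel_left₀ (qPochhammerInf_self_ne_zero hq), jacobiTheta₂]

theorem jacobiTheta₂_add_one_half_triple_product (z : ℂ) {τ : ℂ} (hτ : 0 < τ.im) :
    jacobiTheta₂ (z + 1 / 2) τ = qPochhammerInf (nome τ) (nome τ) *
      (qPochhammerInf (nome (τ / 2 + z)) (nome τ) *
        qPochhammerInf (nome (τ / 2 - z)) (nome τ)) := by
  rw [jacobiTheta₂_triple_product _ hτ, ← add_assoc, ← sub_sub, nome_add_one_half,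
    nome_sub_one_half, neg_neg, neg_neg]

lemma jacobiTheta₂_ne_zero {z τ : ℂ} (hz : 2 * |z.im| < τ.im) : jacobiTheta₂ z τ ≠ 0 := by
  have hτ : 0 < τ.im := (by positivity : 0 ≤ 2 * |z.im|).trans_lt hz
  have hq := norm_nome_lt_one hτ
  have hfactor {w : ℂ} (hw : 0 < w.im) : qPochhammerInf (-nome w) (nome τ) ≠ 0 :=
    qPochhammerInf_ne_zero hq
      (mul_pow_ne_one_of_norm_lt_one (by rw [norm_neg]; exact norm_nome_lt_one hw) hq.le)
  have him : (τ / 2).im = τ.im / 2 := by simp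
  rw [jacobiTheta₂_triple_product z hτ]
  refine mul_ne_zero (qPochhammerInf_self_ne_zero hq) (mul_ne_zero (hfactor ?_) (hfactor ?_))
  · rw [add_im, him]
    linarith [neg_abs_le z.im]
  · rw [sub_im, him]
    linarith [le_abs_self z.im]

lemma jacobiTheta₂_add_intCast_left (z τ : ℂ) (n : ℤ) :
    jacobiTheta₂ (z + n) τ = jacobiTheta₂ z τ := by
  have h : Function.Periodic (jacobiTheta₂ · τ) 1 := fun w ↦ jacobiTheta₂_add_left w τ
  simpa using h.int_mul n z

lemma jacobiTheta₂_add_intCast_right (z τ : ℂ) (n : ℤ) :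
    jacobiTheta₂ z (τ + n) = jacobiTheta₂ (z + n / 2) τ := by
  refine tsum_congr fun k ↦ exp_eq_exp_iff_exists_int.mpr ?_
  obtain ⟨m, hm⟩ := (Int.even_mul_pred_self k).two_dvd
  have hm' : (k * (k - 1) : ℂ) = 2 * m := mod_cast hm
  refine ⟨n * m, ?_⟩
  push_cast
  linear_combination Real.pi * I * n * hm'

lemma jacobiTheta₂_half_period_eq_zero (τ : ℂ) : jacobiTheta₂ (τ / 2 + 1 / 2) τ = 0 := by
  have hshift := jacobiTheta₂_add_left' (-(τ / 2 + 1 / 2)) τ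
  rw [jacobiTheta₂_neg_left,
    show -(Real.pi : ℂ) * I * (τ + 2 * -(τ / 2 + 1 / 2)) = Real.pi * I by ring, exp_pi_mul_I,
    show -(τ / 2 + 1 / 2) + τ = τ / 2 + 1 / 2 + (-1 : ℤ) by push_cast; ring,
    jacobiTheta₂_add_intCast_left] at hshift
  linear_combination hshift / 2

lemma isCompl_range_add_sub :
    IsCompl (Set.range fun p : ℤ × ℤ ↦ (p.1 + p.2, p.1 - p.2))
      (Set.range fun p : ℤ × ℤ ↦ (p.1 + p.2 + 1, p.1 - p.2)) := by
  rw [isCompl_iff, Set.disjoint_left, codisjoint_iff, Set.top_eq_univ, Set.eq_univ_iff_forall]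
  simp only [Set.sup_eq_union, Set.mem_union, Set.mem_range, Prod.exists, Prod.forall,
    Prod.mk.injEq]
  refine ⟨by lia, fun n m ↦ ?_⟩
  rcases Int.even_or_odd' (n + m) with ⟨k, hk | hk⟩
  · exact .inl ⟨k, n - k, by lia, by lia⟩
  · exact .inr ⟨k, n - k - 1, by lia, by lia⟩

lemma hasSum_int_prod_of_add_sub {M : Type*} [AddCommMonoid M] [TopologicalSpace M]
    [ContinuousAdd M] {f : ℤ × ℤ → M} {s t : M}
    (heven : HasSum (fun p : ℤ × ℤ ↦ f (p.1 + p.2, p.1 - p.2)) s)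
    (hodd : HasSum (fun p : ℤ × ℤ ↦ f (p.1 + p.2 + 1, p.1 - p.2)) t) :
    HasSum f (s + t) := by
  have hinj (e : ℤ) : Function.Injective fun p : ℤ × ℤ ↦ (p.1 + p.2 + e, p.1 - p.2) := by
    intro p p' h
    simp only [Prod.mk.injEq] at h
    ext <;> lia
  have hinj₀ : Function.Injective fun p : ℤ × ℤ ↦ (p.1 + p.2, p.1 - p.2) := by
    simpa only [add_zero] using hinj 0
  exact (hinj₀.hasSum_range_iff.mpr heven).add_isCompl isCompl_range_add_sub
    ((hinj 1).hasSum_range_iff.mpr hodd)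

lemma jacobiTheta₂_term_add_mul_term_sub (a b : ℤ) (z w τ : ℂ) :
    jacobiTheta₂_term (a + b) z τ * jacobiTheta₂_term (a - b) w τ =
      jacobiTheta₂_term a (z + w) (2 * τ) * jacobiTheta₂_term b (z - w) (2 * τ) := by
  simp only [jacobiTheta₂_term, ← exp_add]
  congr 1
  push_cast
  ring

lemma jacobiTheta₂_term_add_one (k : ℤ) (z τ : ℂ) :
    jacobiTheta₂_term (k + 1) z τ = nome (τ / 2 + z) * jacobiTheta₂_term k (z + τ) τ := by
  simp only [jacobiTheta₂_term, nome, ← exp_add]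
  congr 1
  push_cast
  ring

lemma hasSum_jacobiTheta₂_term_mul (z w : ℂ) {τ : ℂ} (hτ : 0 < τ.im) :
    HasSum (fun p : ℤ × ℤ ↦ jacobiTheta₂_term p.1 z τ * jacobiTheta₂_term p.2 w τ)
      (jacobiTheta₂ z τ * jacobiTheta₂ w τ) := by
  have hz := hasSum_jacobiTheta₂_term z hτ
  have hw := hasSum_jacobiTheta₂_term w hτ
  rw [← hz.tsum_eq, ← hw.tsum_eq, tsum_mul_tsum_of_summable_norm hz.summable.norm hw.summable.norm]
  exact (summable_mul_of_summable_norm hz.summable.norm hw.summable.norm).hasSum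

theorem jacobiTheta₂_mul (z w : ℂ) {τ : ℂ} (hτ : 0 < τ.im) :
    jacobiTheta₂ z τ * jacobiTheta₂ w τ =
      jacobiTheta₂ (z + w) (2 * τ) * jacobiTheta₂ (z - w) (2 * τ) +
      nome (τ / 2 + z) * (jacobiTheta₂ (z + w + τ) (2 * τ) * jacobiTheta₂ (z - w + τ) (2 * τ)) := by
  have h2τ : 0 < (2 * τ).im := by simpa using hτ
  refine (hasSum_jacobiTheta₂_term_mul z w hτ).unique (hasSum_int_prod_of_add_sub ?_ ?_)
  · simpa only [jacobiTheta₂_term_add_mul_term_sub] using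
      hasSum_jacobiTheta₂_term_mul (z + w) (z - w) h2τ
  · simpa only [jacobiTheta₂_term_add_one, mul_assoc, jacobiTheta₂_term_add_mul_term_sub,
      add_right_comm z τ w, add_sub_right_comm z τ w] using
      (hasSum_jacobiTheta₂_term_mul (z + w + τ) (z - w + τ) h2τ).mul_left (nome (τ / 2 + z))

lemma jacobiTheta₂_mul_add_one_half (z : ℂ) {τ : ℂ} (hτ : 0 < τ.im) :
    jacobiTheta₂ z τ * jacobiTheta₂ (z + 1 / 2) τ =
      jacobiTheta₂ (2 * z + 1 / 2) (2 * τ) * jacobiTheta₂ (1 / 2) (2 * τ) := by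
  have hzero : jacobiTheta₂ (τ - 1 / 2) (2 * τ) = 0 := by
    rw [← jacobiTheta₂_half_period_eq_zero (2 * τ), ← jacobiTheta₂_add_intCast_left (τ - 1 / 2) _ 1]
    congr 1
    push_cast
    ring
  rw [jacobiTheta₂_mul z _ hτ, show z - (z + 1 / 2) + τ = τ - 1 / 2 by ring, hzero, mul_zero,
    mul_zero, add_zero, show z - (z + 1 / 2) = -(1 / 2) by ring, jacobiTheta₂_neg_left, two_mul z,
    add_assoc]

lemma jacobiTheta₂_zero_mul_one_half {τ : ℂ} (hτ : 0 < τ.im) :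
    jacobiTheta₂ 0 τ * jacobiTheta₂ (1 / 2) τ = jacobiTheta₂ (1 / 2) (2 * τ) ^ 2 := by
  simpa only [mul_zero, zero_add, ← sq] using jacobiTheta₂_mul_add_one_half 0 hτ

lemma jacobiTheta₂_mul_one_half_sub (z : ℂ) {τ : ℂ} (hτ : 0 < τ.im) :
    jacobiTheta₂ z τ * jacobiTheta₂ (1 / 2) τ - jacobiTheta₂ (z + 1 / 2) τ * jacobiTheta₂ 0 τ =
      2 * nome (τ / 2 + z) * jacobiTheta₂ (z + 1 / 2 + τ) (2 * τ) ^ 2 := by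
  have hperiod (w : ℂ) : jacobiTheta₂ (w - 1 / 2) (2 * τ) = jacobiTheta₂ (w + 1 / 2) (2 * τ) := by
    rw [← jacobiTheta₂_add_intCast_left (w - 1 / 2) _ 1]
    congr 1
    push_cast
    ring
  rw [jacobiTheta₂_mul z _ hτ, jacobiTheta₂_mul (z + 1 / 2) 0 hτ, add_zero, sub_zero, hperiod z,
    show z - 1 / 2 + τ = z + τ - 1 / 2 by ring, hperiod (z + τ),
    show z + τ + 1 / 2 = z + 1 / 2 + τ by ring, ← add_assoc, nome_add_one_half]
  ring

end JacobiTheta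

section CubicContinuedFraction

variable {τ : ℂ}

lemma c_eq_qPochhammerInf (hτ : 0 < τ.im) :
    c τ = nome (τ / 3) *
      (qPochhammerInf (nome τ ^ 5) (nome τ ^ 6) * qPochhammerInf (nome τ) (nome τ ^ 6) /
        qPochhammerInf (nome τ ^ 3) (nome τ ^ 6) ^ 2) := by
  have hq6 : ‖nome τ ^ 6‖ < 1 := by
    rw [norm_pow]
    exact pow_lt_one₀ (norm_nonneg _) (norm_nome_lt_one hτ) (by norm_num)
  have hq3 : qPochhammerInf (nome τ ^ 3) (nome τ ^ 6) ≠ 0 := by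
    refine qPochhammerInf_ne_zero hq6 (mul_pow_ne_one_of_norm_lt_one ?_ hq6.le)
    rw [norm_pow]
    exact pow_lt_one₀ (norm_nonneg _) (norm_nome_lt_one hτ) (by norm_num)
  have hprod := ((hasProd_qPochhammerInf (nome τ ^ 5) hq6).mul
    (hasProd_qPochhammerInf (nome τ) hq6)).div₀
    ((hasProd_qPochhammerInf (nome τ ^ 3) hq6).pow 2) (pow_ne_zero 2 hq3)
  rw [c, ← hprod.tprod_eq, nome, mul_div_assoc]
  congr 1
  refine tprod_congr fun n ↦ ?_
  rw [show 6 * (n + 1) - 1 = 5 + 6 * n by lia, show 6 * (n + 1) - 5 = 1 + 6 * n by lia,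
    show 6 * (n + 1) - 3 = 3 + 6 * n by lia]
  simp only [pow_add, pow_mul, pow_one]

theorem c_eq_jacobiTheta₂ (hτ : 0 < τ.im) :
    c τ =
      nome (τ / 3) * (jacobiTheta₂ (-(2 * τ) + 1 / 2) (6 * τ) / jacobiTheta₂ (1 / 2) (6 * τ)) := by
  have h6τ : 0 < (6 * τ).im := by simpa using hτ
  have hnum := jacobiTheta₂_add_one_half_triple_product (-(2 * τ)) h6τ
  rw [show 6 * τ / 2 + -(2 * τ) = τ by ring, show 6 * τ / 2 - -(2 * τ) = 5 * τ by ring,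
    nome_ofNat_mul, nome_ofNat_mul] at hnum
  have hden := jacobiTheta₂_add_one_half_triple_product 0 h6τ
  rw [zero_add, add_zero, sub_zero, show 6 * τ / 2 = 3 * τ by ring, nome_ofNat_mul,
    nome_ofNat_mul, ← sq] at hden
  have hq6 : ‖nome τ ^ 6‖ < 1 := by
    rw [← nome_ofNat_mul]
    exact norm_nome_lt_one h6τ
  rw [c_eq_qPochhammerInf hτ, hnum, hden,
    mul_div_mul_left _ _ (qPochhammerInf_self_ne_zero hq6), mul_comm (qPochhammerInf (nome τ) _)]

theorem c₁_eq_jacobiTheta₂ (hτ : 0 < τ.im) :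
    c₁ τ = -(nome (τ / 3) * (jacobiTheta₂ (-(2 * τ)) (6 * τ) / jacobiTheta₂ 0 (6 * τ))) := by
  rw [c₁, c_eq_jacobiTheta₂ (by simpa using hτ), add_div, show (3 / 2 / 3 : ℂ) = 1 / 2 by norm_num,
    nome_add_one_half, show 6 * (τ + 3 / 2) = 6 * τ + (9 : ℤ) by push_cast; ring,
    jacobiTheta₂_add_intCast_right, jacobiTheta₂_add_intCast_right,
    show -(2 * (τ + 3 / 2)) + 1 / 2 + (9 : ℤ) / 2 = -(2 * τ) + (2 : ℤ) by push_cast; ring,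
    show (1 / 2 + (9 : ℤ) / 2 : ℂ) = 0 + (5 : ℤ) by norm_num,
    jacobiTheta₂_add_intCast_left, jacobiTheta₂_add_intCast_left, neg_mul]

theorem c_mul_c₁ (hτ : 0 < τ.im) : c τ * c₁ τ = -c (2 * τ) := by
  have h6τ : 0 < (6 * τ).im := by simpa using hτ
  have hdouble : 2 * (6 * τ) = 6 * (2 * τ) := by ring
  have hnum := jacobiTheta₂_mul_add_one_half (-(2 * τ)) h6τ
  have hden := jacobiTheta₂_zero_mul_one_half h6τ
  rw [hdouble] at hnum hden
  have hne : jacobiTheta₂ (1 / 2) (6 * (2 * τ)) ≠ 0 := jacobiTheta₂_ne_zero (by simpa using hτ)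
  calc c τ * c₁ τ
      = -(nome (τ / 3) ^ 2 *
          (jacobiTheta₂ (-(2 * τ)) (6 * τ) * jacobiTheta₂ (-(2 * τ) + 1 / 2) (6 * τ) /
            (jacobiTheta₂ 0 (6 * τ) * jacobiTheta₂ (1 / 2) (6 * τ)))) := by
        rw [c_eq_jacobiTheta₂ hτ, c₁_eq_jacobiTheta₂ hτ]
        ring
    _ = -(nome (τ / 3) ^ 2 *
          (jacobiTheta₂ (2 * -(2 * τ) + 1 / 2) (6 * (2 * τ)) /
            jacobiTheta₂ (1 / 2) (6 * (2 * τ)))) := by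
        rw [hnum, hden, sq (jacobiTheta₂ _ _), mul_div_mul_right _ _ hne]
    _ = -c (2 * τ) := by
        rw [c_eq_jacobiTheta₂ (τ := 2 * τ) (by simpa using hτ), mul_div_assoc, nome_ofNat_mul,
          mul_neg]

theorem c_add_c₁ (hτ : 0 < τ.im) : c τ + c₁ τ = -2 * c (2 * τ) ^ 2 := by
  have h6τ : 0 < (6 * τ).im := by simpa using hτ
  have hdouble : 2 * (6 * τ) = 6 * (2 * τ) := by ring
  have hnum := jacobiTheta₂_mul_one_half_sub (-(2 * τ)) h6τ
  have hden := jacobiTheta₂_zero_mul_one_half h6τ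
  have hreflect : jacobiTheta₂ (-(2 * τ) + 1 / 2 + 6 * τ) (6 * (2 * τ)) =
      jacobiTheta₂ (-(2 * (2 * τ)) + 1 / 2) (6 * (2 * τ)) := by
    rw [← jacobiTheta₂_neg_left, ← jacobiTheta₂_add_intCast_left _ _ 1]
    congr 1
    push_cast
    ring
  have hnome : nome (6 * τ / 2 + -(2 * τ)) = nome (τ / 3) ^ 3 := by
    rw [← nome_ofNat_mul]
    congr 1
    ring
  rw [hdouble] at hnum hden
  rw [hreflect, hnome] at hnum
  have hhalf : jacobiTheta₂ (1 / 2) (6 * τ) ≠ 0 := jacobiTheta₂_ne_zero (by simpa using hτ)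
  have hzero : jacobiTheta₂ 0 (6 * τ) ≠ 0 := jacobiTheta₂_ne_zero (by simpa using hτ)
  calc c τ + c₁ τ
      = -nome (τ / 3) * ((jacobiTheta₂ (-(2 * τ)) (6 * τ) * jacobiTheta₂ (1 / 2) (6 * τ) -
          jacobiTheta₂ (-(2 * τ) + 1 / 2) (6 * τ) * jacobiTheta₂ 0 (6 * τ)) /
          (jacobiTheta₂ 0 (6 * τ) * jacobiTheta₂ (1 / 2) (6 * τ))) := by
        rw [c_eq_jacobiTheta₂ hτ, c₁_eq_jacobiTheta₂ hτ, ← sub_eq_add_neg, ← mul_sub,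
          div_sub_div _ _ hhalf hzero]
        ring
    _ = -2 * (nome (τ / 3) ^ 2 * (jacobiTheta₂ (-(2 * (2 * τ)) + 1 / 2) (6 * (2 * τ)) /
          jacobiTheta₂ (1 / 2) (6 * (2 * τ)))) ^ 2 := by
        rw [hnum, hden]
        ring
    _ = -2 * c (2 * τ) ^ 2 := by
        rw [c_eq_jacobiTheta₂ (τ := 2 * τ) (by simpa using hτ), mul_div_assoc, nome_ofNat_mul]

end CubicContinuedFraction

/-- For `τ` in the upper half-plane:
(a) `c(τ) + c₁(τ) + 2c(τ)²c₁(τ)² = 0`;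
(b) `2c(τ)²c₁(τ/2) + c₁(τ/2)² − c(τ) = 0`;
moreover `c(τ)·c₁(τ) = −c(2τ)`. -/
theorem cubicCF_companion_relations (τ : ℂ) (hτ : 0 < τ.im) :
    c τ + c₁ τ + 2 * c τ ^ 2 * c₁ τ ^ 2 = 0 ∧
    2 * c τ ^ 2 * c₁ (τ / 2) + c₁ (τ / 2) ^ 2 - c τ = 0 ∧
    c τ * c₁ τ = -c (2 * τ) := by
  have hadd {σ : ℂ} (hσ : 0 < σ.im) : c σ + c₁ σ + 2 * c σ ^ 2 * c₁ σ ^ 2 = 0 := by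
    linear_combination c_add_c₁ hσ + 2 * (c σ * c₁ σ - c (2 * σ)) * c_mul_c₁ hσ
  have hτ2 : 0 < (τ / 2).im := by simpa using hτ
  have hmul : c (τ / 2) * c₁ (τ / 2) = -c τ := by
    rw [c_mul_c₁ hτ2, mul_div_cancel₀ τ two_ne_zero]
  refine ⟨hadd hτ, ?_, c_mul_c₁ hτ⟩
  linear_combination c₁ (τ / 2) * hadd hτ2 +
    (2 * c₁ (τ / 2) * (c τ - c (τ / 2) * c₁ (τ / 2)) - 1) * hmul
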